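/- Let δ ∈ (0,1] and let n0, n1, n2, R̄0, R̄1, R̄2, R̄3 be nonnegative integers with n1 ≥ n0 ≥ n2, R̄0 ≤ n0, R̄1 ≤ n1, R̄2 ≤ n2, R̄3 ≤ n1, satisfying R̄0 + R̄1 + R̄2 + R̄3 ≤ n1 − log₂(16/δ), R̄0 + R̄2 + R̄3 ≤ n0 − log₂(16/δ), and R̄2 + R̄3 ≤ n2. For integers 0 ≤ n⁺ ≤ n⁻ ≤ n1 let Ū(n⁻,n⁺) denote the set of vectors ū ∈ 𝔽₂^{n1} with ū_i = 0 for all i ∈ {1,…,n1−n⁻} ∪ {n1−n⁺+1,…,n1}. Let B be the set of (g0,g1,g2) ∈ (1,2]³ for which there exists a quadruple (ū0,ū1,ū2,ū3) ∈ Ū(n0, n0−R̄0) × Ū(n1, n1−R̄1) × Ū(n2, n2−R̄2) × Ū(R̄3, 0), not all four zero, with Ḡ(g0)·ū0 + Ḡ(g1)·(ū1+ū3) + Ḡ(g2)·ū2 = 0 in 𝔽₂^{n1}, where the matrices are of size n1×n1. Then μ(B) ≤ δ. -/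

import Mathlib

/-! The bits of `g` are uniform and independent, so for a fixed `u ≠ 0` whose first nonzero entry is
at index `v`, the vector `Gmat n g *ᵥ u` has `n - 1 - v` uniform free entries: forward substitution
recovers the first `n - v` digits of `g` from it, which confines `g` to a dyadic interval of length
`2 ^ -(n - 1 - v)` (`volume_slice_le`).

Let `v` be the least index at which one of `u0`, `u1 + u3`, `u2` is nonzero. Leading digits being
`1`, row `v` of the equation reads `u0 v + (u1 + u3) v + u2 v = 0`, so exactly two of these entries
are nonzero, and the bounds on the supports force the nonzero entry of `u1 + u3` to come from `u1`
(`exists_leading`). Hence every bad gain either has a coordinate equal to `2`, a null event, or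
solves the equation for a quadruple in `Quads v` for some `v`. A count of `Quads v` from the sizes
of the supports (`card_Quads_le`), together with the slice bound, shows that `v` contributes at most
`2 · 2 ^ -K · 2 ^ -(v - m)`, where `K = ⌈log₂ (16 / δ)⌉` and `m` is `n1 - n0` for `v < n1 - n2` and
`n1 - n2` otherwise. The two geometric series add up to at most `8 · 2 ^ -K ≤ δ / 2`. -/

open MeasureTheory Matrix

/-- The `j`-th binary digit of a real number `g`, viewed in `𝔽₂`:
`[g]_j = ⌊2^j g⌋ − 2⌊2^{j−1} g⌋`. -/
noncomputable def binDigit (g : ℝ) (j : ℕ) : ZMod 2 :=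
  ((⌊(2:ℝ) ^ (j : ℤ) * g⌋ - 2 * ⌊(2:ℝ) ^ ((j : ℤ) - 1) * g⌋ : ℤ) : ZMod 2)

/-- The `n × n` lower-triangular Toeplitz matrix over `𝔽₂` whose `(i,j)` entry
equals `[g]_{i−j}` for `j ≤ i` and `0` for `i < j`. -/
noncomputable def Gmat (n : ℕ) (g : ℝ) : Matrix (Fin n) (Fin n) (ZMod 2) :=
  fun i j => if (j : ℕ) ≤ (i : ℕ) then binDigit g ((i : ℕ) - (j : ℕ)) else 0

/-- `Ū(n⁻,n⁺)`: vectors `ū ∈ 𝔽₂^{n1}` with `ū_i = 0` for all (1-based) indices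
`i ∈ {1,…,n1−n⁻} ∪ {n1−n⁺+1,…,n1}`. -/
def Ubar (n1 nminus nplus : ℕ) : Set (Fin n1 → ZMod 2) :=
  {u | ∀ i : Fin n1,
    ((i : ℕ) + 1 ≤ n1 - nminus ∨ n1 - nplus + 1 ≤ (i : ℕ) + 1) → u i = 0}

open scoped ENNReal

/-! ### Binary digits -/

lemma floor_two_pow_succ (g : ℝ) (j : ℕ) :
    ⌊(2:ℝ) ^ ((j : ℤ) + 1) * g⌋ = 2 * ⌊(2:ℝ) ^ (j : ℤ) * g⌋ ∨
    ⌊(2:ℝ) ^ ((j : ℤ) + 1) * g⌋ = 2 * ⌊(2:ℝ) ^ (j : ℤ) * g⌋ + 1 := by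
  have e : (2:ℝ) ^ ((j : ℤ) + 1) * g = 2 * ((2:ℝ) ^ (j : ℤ) * g) := by
    rw [zpow_add_one₀ (by norm_num)]; ring
  rw [e]
  generalize (2:ℝ) ^ (j : ℤ) * g = x
  have h1 : 2 * ⌊x⌋ ≤ ⌊2 * x⌋ := by
    rw [Int.le_floor]; push_cast; linarith [Int.floor_le x]
  have h2 : ⌊2 * x⌋ < 2 * ⌊x⌋ + 2 := by
    rw [Int.floor_lt]; push_cast; linarith [Int.lt_floor_add_one x]
  omega

lemma binDigit_succ (g : ℝ) (j : ℕ) :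
    binDigit g (j + 1) =
      ((⌊(2:ℝ) ^ ((j : ℤ) + 1) * g⌋ - 2 * ⌊(2:ℝ) ^ (j : ℤ) * g⌋ : ℤ) : ZMod 2) := by
  simp [binDigit]

lemma binDigit_zero_of_lt {g : ℝ} (h1 : 1 < g) (h2 : g < 2) : binDigit g 0 = 1 := by
  have a : ⌊g⌋ = 1 := by rw [Int.floor_eq_iff]; norm_num; constructor <;> linarith
  have b : ⌊(2:ℝ)⁻¹ * g⌋ = 0 := by rw [Int.floor_eq_iff]; norm_num; constructor <;> linarith
  simp [binDigit, a, b]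

lemma binDigit_zero_two : binDigit 2 0 = 0 := by
  simp [binDigit]

/-- On `(1, 2]`, the first `m + 1` digits determine the truncation of `g` to `m` fractional bits.
Digit `0` separates `g = 2` from the rest of the interval. -/
lemma floor_eq_of_digits {g g' : ℝ} (hg : g ∈ Set.Ioc (1:ℝ) 2) (hg' : g' ∈ Set.Ioc (1:ℝ) 2) :
    ∀ m : ℕ, (∀ j ≤ m, binDigit g j = binDigit g' j) →
      ⌊(2:ℝ) ^ (m : ℤ) * g⌋ = ⌊(2:ℝ) ^ (m : ℤ) * g'⌋ := by
  intro m
  induction m with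
  | zero =>
    intro h
    have h0 := h 0 le_rfl
    rcases lt_or_eq_of_le hg.2 with a | a <;> rcases lt_or_eq_of_le hg'.2 with b | b
    · have e1 : ⌊g⌋ = 1 := by
        rw [Int.floor_eq_iff]; norm_num; constructor <;> linarith [hg.1]
      have e2 : ⌊g'⌋ = 1 := by
        rw [Int.floor_eq_iff]; norm_num; constructor <;> linarith [hg'.1]
      simp [e1, e2]
    · rw [binDigit_zero_of_lt hg.1 a, b, binDigit_zero_two] at h0
      exact absurd h0 (by decide)
    · rw [binDigit_zero_of_lt hg'.1 b, a, binDigit_zero_two] at h0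
      exact absurd h0 (by decide)
    · rw [a, b]
  | succ m ih =>
    intro h
    have i1 := ih (fun j hj => h j (by omega))
    have h0 := h (m + 1) le_rfl
    rw [binDigit_succ, binDigit_succ, ZMod.intCast_eq_intCast_iff_dvd_sub] at h0
    push_cast at h0 ⊢
    have a := floor_two_pow_succ g m
    have b := floor_two_pow_succ g' m
    omega

/-! ### Forward substitution and the measure of a slice -/

/-- Forward substitution: row `v + j` of the system determines digit `j` from the digits before. -/
lemma digits_eq_of_mulVec {n : ℕ} {u : Fin n → ZMod 2} {v : Fin n} (hu : ∀ i < v, u i = 0)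
    (hv : u v ≠ 0) {g g' : ℝ} (h : Gmat n g *ᵥ u = Gmat n g' *ᵥ u) (j : ℕ) (hj : v + j < n) :
    binDigit g j = binDigit g' j := by
  induction j using Nat.strong_induction_on with
  | _ j ih =>
    have hr := congrFun h ⟨v + j, hj⟩
    simp only [Matrix.mulVec, dotProduct] at hr
    rw [← Finset.add_sum_erase _ _ (Finset.mem_univ v),
      ← Finset.add_sum_erase (a := v) _ (fun i => Gmat n g' _ i * u i) (Finset.mem_univ v)] at hr
    have hs : ∑ i ∈ Finset.univ.erase v, Gmat n g ⟨v + j, hj⟩ i * u i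
        = ∑ i ∈ Finset.univ.erase v, Gmat n g' ⟨v + j, hj⟩ i * u i := by
      refine Finset.sum_congr rfl fun i hi => ?_
      rcases lt_or_ge i v with hlt | hge
      · simp [hu i hlt]
      · have hvi : (v : ℕ) < i := by
          have := Finset.ne_of_mem_erase hi
          exact lt_of_le_of_ne hge (fun e => this (Fin.ext e.symm))
        simp only [Gmat]
        split_ifs with hle
        · rw [ih (v + j - i) (by omega) (by omega)]
        · rfl
    rw [hs] at hr
    have := add_right_cancel hr
    simpa [Gmat, hv] using this

lemma volume_slice_le {n : ℕ} {u : Fin n → ZMod 2} {v : Fin n} (hu : ∀ i < v, u i = 0)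
    (hv : u v ≠ 0) (c : Fin n → ZMod 2) :
    volume {g : ℝ | g ∈ Set.Ioc (1:ℝ) 2 ∧ Gmat n g *ᵥ u = c} ≤ (2⁻¹ : ℝ≥0∞) ^ (n - 1 - v) := by
  set m := n - 1 - (v : ℕ) with hm
  rcases Set.eq_empty_or_nonempty {g : ℝ | g ∈ Set.Ioc (1:ℝ) 2 ∧ Gmat n g *ᵥ u = c} with he | ⟨g', hg'⟩
  · rw [he, measure_empty]; exact zero_le
  have hsub : {g : ℝ | g ∈ Set.Ioc (1:ℝ) 2 ∧ Gmat n g *ᵥ u = c} ⊆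
      Set.Ico ((⌊(2:ℝ) ^ (m : ℤ) * g'⌋ : ℝ) / 2 ^ m)
        (((⌊(2:ℝ) ^ (m : ℤ) * g'⌋ : ℝ) + 1) / 2 ^ m) := by
    rintro g ⟨hg, hgc⟩
    have hf := floor_eq_of_digits hg hg'.1 m (fun j hj =>
      digits_eq_of_mulVec hu hv (hgc.trans hg'.2.symm) j (by have := v.2; omega))
    rw [← hf, Set.mem_Ico, div_le_iff₀ (by positivity), lt_div_iff₀ (by positivity)]
    have h1 := Int.floor_le ((2:ℝ) ^ (m : ℤ) * g)
    have h2 := Int.lt_floor_add_one ((2:ℝ) ^ (m : ℤ) * g)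
    rw [zpow_natCast] at *
    constructor <;> linarith
  refine (measure_mono hsub).trans ?_
  rw [Real.volume_Ico, ← sub_div, add_sub_cancel_left, one_div, ← inv_pow,
    ENNReal.ofReal_pow (by norm_num), ENNReal.ofReal_inv_of_pos (by norm_num)]
  simp

lemma mulVec_of_leading {n : ℕ} {u : Fin n → ZMod 2} {v : Fin n} (hu : ∀ i < v, u i = 0)
    {g : ℝ} (h1 : 1 < g) (h2 : g < 2) : (Gmat n g *ᵥ u) v = u v := by
  simp only [Matrix.mulVec, dotProduct]
  rw [Finset.sum_eq_single v]
  · simp [Gmat, binDigit_zero_of_lt h1 h2]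
  · intro i _ hne
    rcases lt_or_gt_of_ne hne with h | h
    · simp [hu i h]
    · have : ¬ (i : ℕ) ≤ v := by simpa using h
      simp [Gmat, this]
  · simp

/-! ### The event of a fixed quadruple -/

/-- The gains in `(1, 2]³` that solve the equation for fixed `u0`, `w = u1 + u3` and `u2`. -/
def Zset (n : ℕ) (u0 w u2 : Fin n → ZMod 2) : Set (ℝ × ℝ × ℝ) :=
  {g | (g.1 ∈ Set.Ioc (1:ℝ) 2 ∧ g.2.1 ∈ Set.Ioc (1:ℝ) 2 ∧ g.2.2 ∈ Set.Ioc (1:ℝ) 2) ∧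
    Gmat n g.1 *ᵥ u0 + Gmat n g.2.1 *ᵥ w + Gmat n g.2.2 *ᵥ u2 = 0}

lemma measurableSet_Zset (n : ℕ) (u0 w u2 : Fin n → ZMod 2) :
    MeasurableSet (Zset n u0 w u2) := by
  let _ : MeasurableSpace (ZMod 2) := ⊤
  have : DiscreteMeasurableSpace (ZMod 2) := ⟨fun _ => trivial⟩
  have hb : ∀ j, Measurable (fun g : ℝ => binDigit g j) := by
    intro j
    have h1 : Measurable fun g : ℝ =>
        (⌊(2:ℝ) ^ (j : ℤ) * g⌋ - 2 * ⌊(2:ℝ) ^ ((j : ℤ) - 1) * g⌋ : ℤ) := by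
      apply Measurable.sub
      · exact Int.measurable_floor.comp (measurable_const_mul _)
      · exact (Int.measurable_floor.comp (measurable_const_mul _)).const_mul _
    exact (measurable_from_top (f := fun z : ℤ => (z : ZMod 2))).comp h1
  -- As plain functions, matrices carry the product measurable space, which is discrete here.
  let D : ℝ → Fin n → Fin n → ZMod 2 := fun g i j => Gmat n g i j
  have hG : Measurable D := by
    rw [measurable_pi_iff]; intro i
    rw [measurable_pi_iff]; intro j
    by_cases h : (j : ℕ) ≤ i
    · simpa only [D, Gmat, if_pos h] using hb _
    · simp only [D, Gmat, if_neg h, measurable_const]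
  have hT : Measurable (fun g : ℝ × ℝ × ℝ => (D g.1, D g.2.1, D g.2.2)) :=
    (hG.comp measurable_fst).prodMk
      ((hG.comp (measurable_fst.comp measurable_snd)).prodMk
        (hG.comp (measurable_snd.comp measurable_snd)))
  have hI : MeasurableSet (Set.Ioc (1:ℝ) 2) := measurableSet_Ioc
  have hE := hT (MeasurableSet.of_discrete (s := {M | (Matrix.of M.1) *ᵥ u0 +
    (Matrix.of M.2.1) *ᵥ w + (Matrix.of M.2.2) *ᵥ u2 = 0}))
  exact ((measurable_fst hI).inter (((measurable_fst.comp measurable_snd) hI).inter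
    ((measurable_snd.comp measurable_snd) hI))).inter hE

lemma prod_le_of_slice {α β : Type*} [MeasurableSpace α] [MeasurableSpace β] (μ : Measure α)
    (ν : Measure β) [SFinite ν] {s : Set (α × β)} (hs : MeasurableSet s) {I : Set α}
    (hI : MeasurableSet I) (hμ : μ I ≤ 1) (hsI : ∀ p ∈ s, p.1 ∈ I) {ε : ℝ≥0∞}
    (h : ∀ x ∈ I, ν (Prod.mk x ⁻¹' s) ≤ ε) : μ.prod ν s ≤ ε := by
  rw [Measure.prod_apply hs]
  calc ∫⁻ x, ν (Prod.mk x ⁻¹' s) ∂μ ≤ ∫⁻ x, I.indicator (fun _ => ε) x ∂μ := by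
        refine lintegral_mono fun x => ?_
        by_cases hx : x ∈ I
        · simpa [hx] using h x hx
        · have : Prod.mk x ⁻¹' s = ∅ := by
            ext y; simp only [Set.mem_preimage, Set.mem_empty_iff_false, iff_false]
            exact fun hy => hx (hsI _ hy)
          simp [this]
    _ = ε * μ I := by rw [lintegral_indicator_const hI]
    _ ≤ ε := by simpa using mul_le_mul_right hμ ε

lemma volume_Zset_le_first {n : ℕ} {u0 w u2 : Fin n → ZMod 2} {v : Fin n}
    (hu : ∀ i < v, u0 i = 0) (hv : u0 v ≠ 0) :
    volume (Zset n u0 w u2) ≤ (2⁻¹ : ℝ≥0∞) ^ (n - 1 - v) := by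
  have hm := measurableSet_Zset n u0 w u2
  rw [Measure.volume_eq_prod, ← Measure.prod_swap, Measure.map_apply measurable_swap hm]
  refine prod_le_of_slice _ _ (measurable_swap hm)
    (I := Set.Ioc (1:ℝ) 2 ×ˢ Set.Ioc (1:ℝ) 2) (by measurability) ?_ ?_ ?_
  · rw [Measure.volume_eq_prod, Measure.prod_prod]; simp; norm_num
  · rintro p hp; exact ⟨hp.1.2.1, hp.1.2.2⟩
  · rintro x -
    refine (measure_mono ?_).trans
      (volume_slice_le hu hv (-(Gmat n x.1 *ᵥ w + Gmat n x.2 *ᵥ u2)))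
    rintro g hg
    refine ⟨hg.1.1, ?_⟩
    have := hg.2
    rw [add_assoc] at this
    exact eq_neg_of_add_eq_zero_left this

lemma volume_Zset_le_last {n : ℕ} {u0 w u2 : Fin n → ZMod 2} {v : Fin n}
    (hu : ∀ i < v, u2 i = 0) (hv : u2 v ≠ 0) :
    volume (Zset n u0 w u2) ≤ (2⁻¹ : ℝ≥0∞) ^ (n - 1 - v) := by
  have hm := measurableSet_Zset n u0 w u2
  have h1 : volume (Set.Ioc (1:ℝ) 2) ≤ 1 := by simp; norm_num
  rw [Measure.volume_eq_prod]
  refine prod_le_of_slice _ _ hm measurableSet_Ioc h1 (fun p hp => hp.1.1) fun x _ => ?_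
  have hm' : MeasurableSet (Prod.mk x ⁻¹' Zset n u0 w u2) := measurable_prodMk_left hm
  rw [Measure.volume_eq_prod]
  refine prod_le_of_slice _ _ hm' measurableSet_Ioc h1 (fun p hp => hp.1.2.1) fun y _ => ?_
  refine (measure_mono ?_).trans
    (volume_slice_le hu hv (-(Gmat n x *ᵥ u0 + Gmat n y *ᵥ w)))
  rintro g hg
  exact ⟨hg.1.2.2, eq_neg_of_add_eq_zero_right hg.2⟩

/-! ### Counting quadruples -/

/-- The vectors supported on the (0-based) indices in `[a, b)`. -/
def Win (n a b : ℕ) : Finset (Fin n → ZMod 2) :=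
  Finset.univ.filter fun u => ∀ i, u i ≠ 0 → a ≤ (i : ℕ) ∧ (i : ℕ) < b

lemma mem_Win {n a b : ℕ} {u : Fin n → ZMod 2} :
    u ∈ Win n a b ↔ ∀ i, u i ≠ 0 → a ≤ (i : ℕ) ∧ (i : ℕ) < b := by simp [Win]

lemma card_Win_le (n a b : ℕ) : (Win n a b).card ≤ 2 ^ (b - a) := by
  have : (Win n a b).card ≤ (Finset.univ : Finset (Fin (b - a) → ZMod 2)).card := by
    refine Finset.card_le_card_of_injOn
      (fun u k => if h : a + k < n then u ⟨a + k, h⟩ else 0)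
      (fun _ _ => Finset.mem_coe.2 (Finset.mem_univ _)) ?_
    intro u hu u' hu' he
    rw [Finset.mem_coe, mem_Win] at hu hu'
    funext i
    by_cases hi : a ≤ (i : ℕ) ∧ (i : ℕ) < b
    · have := congrFun he ⟨i - a, by omega⟩
      have e : a + ((i : ℕ) - a) = i := by omega
      simpa [e] using this
    · rw [not_not.1 fun h => hi (hu i h), not_not.1 fun h => hi (hu' i h)]
  simpa [ZMod.card] using this

/-- The quadruples `(u0, u1, u2, u3)` of messages for which `u0`, `u1`, `u2` vanish before `v` and
at least two of them do not vanish at `v`. -/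
def Quads (n0 n1 n2 R0 R1 R2 R3 : ℕ) (v : Fin n1) :
    Finset ((Fin n1 → ZMod 2) × (Fin n1 → ZMod 2) × (Fin n1 → ZMod 2) × (Fin n1 → ZMod 2)) :=
  (Win n1 (max (v : ℕ) (n1 - n0)) (n1 - n0 + R0) ×ˢ Win n1 v R1 ×ˢ
    Win n1 (max (v : ℕ) (n1 - n2)) (n1 - n2 + R2) ×ˢ Win n1 (n1 - R3) n1).filter fun q =>
      (q.1 v ≠ 0 ∧ q.2.1 v ≠ 0) ∨ (q.1 v ≠ 0 ∧ q.2.2.1 v ≠ 0) ∨ (q.2.1 v ≠ 0 ∧ q.2.2.1 v ≠ 0)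

lemma card_Quads_le_pow (n0 n1 n2 R0 R1 R2 R3 : ℕ) (v : Fin n1) :
    (Quads n0 n1 n2 R0 R1 R2 R3 v).card ≤
      2 ^ ((n1 - n0 + R0 - max (v : ℕ) (n1 - n0)) + ((R1 - v) +
        ((n1 - n2 + R2 - max (v : ℕ) (n1 - n2)) + (n1 - (n1 - R3))))) := by
  refine (Finset.card_filter_le _ _).trans ?_
  rw [Finset.card_product, Finset.card_product, Finset.card_product, pow_add, pow_add, pow_add]
  gcongr <;> exact card_Win_le _ _ _

lemma volume_Zset_of_mem_Quads {n0 n1 n2 R0 R1 R2 R3 : ℕ} {v : Fin n1}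
    {q : (Fin n1 → ZMod 2) × (Fin n1 → ZMod 2) × (Fin n1 → ZMod 2) × (Fin n1 → ZMod 2)}
    (hq : q ∈ Quads n0 n1 n2 R0 R1 R2 R3 v) :
    volume (Zset n1 q.1 (q.2.1 + q.2.2.2) q.2.2.1) ≤ (2⁻¹ : ℝ≥0∞) ^ (n1 - 1 - v) := by
  simp only [Quads, Finset.mem_filter, Finset.mem_product, mem_Win] at hq
  obtain ⟨⟨h0, -, h2, -⟩, hv⟩ := hq
  have a0 : ∀ i < v, q.1 i = 0 := fun i hi => by
    by_contra h
    have := (h0 i h).1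
    have : (i : ℕ) < v := hi
    omega
  have a2 : ∀ i < v, q.2.2.1 i = 0 := fun i hi => by
    by_contra h
    have := (h2 i h).1
    have : (i : ℕ) < v := hi
    omega
  rcases hv with hv | hv | hv
  · exact volume_Zset_le_first a0 hv.1
  · exact volume_Zset_le_first a0 hv.1
  · exact volume_Zset_le_last a2 hv.2

/-- The rate constraints, read as: the number of quadruples with leading index `v`, times `2 ^ K`,
times a factor `2 ^ (v - m)` that makes the sum over `v` geometric, is at most `2 ^ (n1 - v)`.
For `v < n1 - n2` the vector `u2` vanishes at `v`, and `m = n1 - n0`; otherwise `m = n1 - n2`. -/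
lemma card_Quads_le {n0 n1 n2 R0 R1 R2 R3 K : ℕ} (hn10 : n0 ≤ n1) (hn02 : n2 ≤ n0)
    (hR3 : R3 ≤ n1) (hc1 : R0 + R1 + R2 + R3 + K ≤ n1) (hc2 : R0 + R2 + R3 + K ≤ n0)
    {v : Fin n1} (hne : (Quads n0 n1 n2 R0 R1 R2 R3 v).Nonempty) :
    ∃ m, (m = n1 - n0 ∨ m = n1 - n2) ∧ m ≤ v ∧
      ∃ e, (Quads n0 n1 n2 R0 R1 R2 R3 v).card ≤ 2 ^ e ∧ e + K + (v - m) ≤ n1 - 1 - v + 1 := by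
  have hcard := card_Quads_le_pow n0 n1 n2 R0 R1 R2 R3 v
  obtain ⟨q, hq⟩ := hne
  simp only [Quads, Finset.mem_filter, Finset.mem_product, mem_Win] at hq
  obtain ⟨⟨h0, h1, h2, -⟩, hv⟩ := hq
  have hvn := v.2
  have h0 := h0 v
  have h1 := h1 v
  have h2 := h2 v
  by_cases hlt : (v : ℕ) < n1 - n2
  · refine ⟨n1 - n0, Or.inl rfl, ?_, _, hcard, ?_⟩ <;> rcases hv with ⟨a, b⟩ | ⟨a, b⟩ | ⟨a, b⟩ <;>
      simp only [a, b, ne_eq, not_false_eq_true, forall_const] at h0 h1 h2 <;> omega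
  · refine ⟨n1 - n2, Or.inr rfl, by omega, _, hcard, ?_⟩
    rcases hv with ⟨a, b⟩ | ⟨a, b⟩ | ⟨a, b⟩ <;>
      simp only [a, b, ne_eq, not_false_eq_true, forall_const] at h0 h1 h2 <;> omega

/-! ### Summation over the leading index -/

lemma sum_geometric_le (n a : ℕ) :
    ∑ v : Fin n, (if a ≤ (v : ℕ) then (2⁻¹ : ℝ≥0∞) ^ ((v : ℕ) - a) else 0) ≤ 2 := by
  rw [Fin.sum_univ_eq_sum_range (fun v => if a ≤ v then (2⁻¹ : ℝ≥0∞) ^ (v - a) else 0),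
    ← Finset.sum_filter]
  have : (Finset.range n).filter (fun v => a ≤ v) = Finset.Ico a n := by
    ext; simp; omega
  rw [this, Finset.sum_Ico_eq_sum_range]
  simp only [add_tsub_cancel_left]
  refine (ENNReal.sum_le_tsum _).trans ?_
  rw [ENNReal.tsum_geometric, ENNReal.one_sub_inv_two, inv_inv]

/-- The gains solving the equation for some quadruple with leading index `v`. -/
def Bad (n0 n1 n2 R0 R1 R2 R3 : ℕ) (v : Fin n1) : Set (ℝ × ℝ × ℝ) :=
  ⋃ q ∈ Quads n0 n1 n2 R0 R1 R2 R3 v, Zset n1 q.1 (q.2.1 + q.2.2.2) q.2.2.1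

lemma volume_Bad_le {n0 n1 n2 R0 R1 R2 R3 K : ℕ} (hn10 : n0 ≤ n1) (hn02 : n2 ≤ n0)
    (hR3 : R3 ≤ n1) (hc1 : R0 + R1 + R2 + R3 + K ≤ n1) (hc2 : R0 + R2 + R3 + K ≤ n0)
    (v : Fin n1) :
    volume (Bad n0 n1 n2 R0 R1 R2 R3 v) ≤ 2 * (2⁻¹ : ℝ≥0∞) ^ K *
      ((if n1 - n0 ≤ (v : ℕ) then (2⁻¹ : ℝ≥0∞) ^ ((v : ℕ) - (n1 - n0)) else 0) +
        (if n1 - n2 ≤ (v : ℕ) then (2⁻¹ : ℝ≥0∞) ^ ((v : ℕ) - (n1 - n2)) else 0)) := by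
  rcases Finset.eq_empty_or_nonempty (Quads n0 n1 n2 R0 R1 R2 R3 v) with he | hne
  · simp [Bad, he]
  obtain ⟨m, hm, hmv, e, hcard, hexp⟩ := card_Quads_le hn10 hn02 hR3 hc1 hc2 hne
  have h22 : (2:ℝ≥0∞) * 2⁻¹ = 1 := ENNReal.mul_inv_cancel (by norm_num) (by norm_num)
  have key : volume (Bad n0 n1 n2 R0 R1 R2 R3 v) ≤
      2 * (2⁻¹ : ℝ≥0∞) ^ K * (2⁻¹ : ℝ≥0∞) ^ ((v : ℕ) - m) := by
    calc volume (Bad n0 n1 n2 R0 R1 R2 R3 v)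
        ≤ ∑ q ∈ Quads n0 n1 n2 R0 R1 R2 R3 v, (2⁻¹ : ℝ≥0∞) ^ (n1 - 1 - v) :=
          (measure_biUnion_finset_le _ _).trans
            (Finset.sum_le_sum fun q hq => volume_Zset_of_mem_Quads hq)
      _ = (Quads n0 n1 n2 R0 R1 R2 R3 v).card * (2⁻¹ : ℝ≥0∞) ^ (n1 - 1 - v) := by
          rw [Finset.sum_const, nsmul_eq_mul]
      _ ≤ 2 ^ e * (2⁻¹ : ℝ≥0∞) ^ (n1 - 1 - v) := by
          gcongr; exact_mod_cast hcard
      _ = 2 * 2 ^ e * (2⁻¹ : ℝ≥0∞) ^ (n1 - 1 - v + 1) := by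
          rw [pow_succ]
          calc _ = 2 ^ e * (2⁻¹ : ℝ≥0∞) ^ (n1 - 1 - v) * (2 * 2⁻¹) := by rw [h22, mul_one]
            _ = _ := by ring
      _ ≤ 2 * 2 ^ e * (2⁻¹ : ℝ≥0∞) ^ (e + K + (v - m)) := by
          gcongr 2 * 2 ^ e * ?_
          exact pow_le_pow_right_of_le_one' (by simp) hexp
      _ = 2 * (2 * 2⁻¹) ^ e * (2⁻¹ : ℝ≥0∞) ^ K * (2⁻¹ : ℝ≥0∞) ^ ((v : ℕ) - m) := by
          rw [pow_add, pow_add, mul_pow]; ring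
      _ = _ := by rw [h22]; simp
  refine key.trans ?_
  gcongr
  rcases hm with rfl | rfl
  · rw [if_pos hmv]; exact le_self_add
  · rw [if_pos hmv]; exact le_add_self

/-- At the least index where one of `u0`, `u1 + u3`, `u2` is nonzero, the equation forces exactly
two of them to be nonzero. -/
lemma exists_leading {n0 n1 n2 R0 R1 R2 R3 : ℕ} (hn10 : n0 ≤ n1) (hn02 : n2 ≤ n0)
    (hc1 : R0 + R1 + R2 + R3 ≤ n1) (hc2 : R0 + R2 + R3 ≤ n0) (hc3 : R2 + R3 ≤ n2)
    {u0 u1 u2 u3 : Fin n1 → ZMod 2} (h0 : u0 ∈ Win n1 (n1 - n0) (n1 - n0 + R0))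
    (h1 : u1 ∈ Win n1 0 R1) (h2 : u2 ∈ Win n1 (n1 - n2) (n1 - n2 + R2))
    (h3 : u3 ∈ Win n1 (n1 - R3) n1) (hne : ¬(u0 = 0 ∧ u1 = 0 ∧ u2 = 0 ∧ u3 = 0))
    {g0 g1 g2 : ℝ} (hg0 : g0 ∈ Set.Ioo (1:ℝ) 2) (hg1 : g1 ∈ Set.Ioo (1:ℝ) 2)
    (hg2 : g2 ∈ Set.Ioo (1:ℝ) 2)
    (heq : Gmat n1 g0 *ᵥ u0 + Gmat n1 g1 *ᵥ (u1 + u3) + Gmat n1 g2 *ᵥ u2 = 0) :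
    ∃ v, (u0, u1, u2, u3) ∈ Quads n0 n1 n2 R0 R1 R2 R3 v := by
  rw [mem_Win] at h0 h1 h2 h3
  have h13 : ∀ i, u1 i ≠ 0 → u3 i = 0 := fun i a => by
    by_contra b
    have := h1 i a
    have := h3 i b
    omega
  let s : Finset (Fin n1) := Finset.univ.filter fun i => u0 i ≠ 0 ∨ (u1 + u3) i ≠ 0 ∨ u2 i ≠ 0
  have hs : s.Nonempty := by
    by_contra hs
    rw [Finset.not_nonempty_iff_eq_empty, Finset.filter_eq_empty_iff] at hs
    have hs : ∀ i, u0 i = 0 ∧ (u1 + u3) i = 0 ∧ u2 i = 0 := fun i => by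
      have := hs (Finset.mem_univ i)
      tauto
    have e1 : ∀ i, u1 i = 0 := fun i => by
      by_contra a
      have := (hs i).2.1
      rw [Pi.add_apply, h13 i a, add_zero] at this
      exact a this
    exact hne ⟨funext fun i => (hs i).1, funext e1, funext fun i => (hs i).2.2,
      funext fun i => by have := (hs i).2.1; rwa [Pi.add_apply, e1 i, zero_add] at this⟩
  obtain ⟨v, hvs, hmin⟩ := s.exists_min_image id hs
  have hmin' : ∀ i, u0 i ≠ 0 ∨ (u1 + u3) i ≠ 0 ∨ u2 i ≠ 0 → (v : ℕ) ≤ i := fun i hi =>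
    hmin i (Finset.mem_filter.2 ⟨Finset.mem_univ _, hi⟩)
  have hvs := (Finset.mem_filter.1 hvs).2
  have z : ∀ i < v, ¬(u0 i ≠ 0 ∨ (u1 + u3) i ≠ 0 ∨ u2 i ≠ 0) := fun i hi h =>
    absurd (hmin' i h) (not_le.2 hi)
  have hrow := congrFun heq v
  simp only [Pi.add_apply, Pi.zero_apply] at hrow
  rw [mulVec_of_leading (fun i hi => not_not.1 fun h => z i hi (Or.inl h)) hg0.1 hg0.2,
    mulVec_of_leading (fun i hi => not_not.1 fun h => z i hi (Or.inr (Or.inl h))) hg1.1 hg1.2,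
    mulVec_of_leading (fun i hi => not_not.1 fun h => z i hi (Or.inr (Or.inr h))) hg2.1 hg2.2]
    at hrow
  have htwo : ∀ a b c : ZMod 2, a + b + c = 0 → (a ≠ 0 ∨ b ≠ 0 ∨ c ≠ 0) →
      (a ≠ 0 ∧ b ≠ 0) ∨ (a ≠ 0 ∧ c ≠ 0) ∨ (b ≠ 0 ∧ c ≠ 0) := by
    have h01 : ∀ x : ZMod 2, x = 0 ∨ x = 1 := by decide
    intro a b c
    rcases h01 a with rfl | rfl <;> rcases h01 b with rfl | rfl <;>
      rcases h01 c with rfl | rfl <;> decide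
  have hpair := htwo _ _ _ hrow hvs
  have h3v : u0 v ≠ 0 ∨ u2 v ≠ 0 → u3 v = 0 := fun h => by
    by_contra b
    have := h3 v b
    rcases h with h | h
    · have := h0 v h
      omega
    · have := h2 v h
      omega
  refine ⟨v, ?_⟩
  simp only [Quads, Finset.mem_filter, Finset.mem_product, mem_Win]
  refine ⟨⟨fun i hi => ⟨max_le (hmin' i (Or.inl hi)) (h0 i hi).1, (h0 i hi).2⟩,
    fun i hi => ⟨hmin' i (Or.inr (Or.inl ?_)), (h1 i hi).2⟩,
    fun i hi => ⟨max_le (hmin' i (Or.inr (Or.inr hi))) (h2 i hi).1, (h2 i hi).2⟩, h3⟩, ?_⟩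
  · rwa [Pi.add_apply, h13 i hi, add_zero]
  · rcases hpair with ⟨a, b⟩ | ⟨a, b⟩ | ⟨a, b⟩
    · rw [Pi.add_apply, h3v (Or.inl a), add_zero] at b
      exact Or.inl ⟨a, b⟩
    · exact Or.inr (Or.inl ⟨a, b⟩)
    · rw [Pi.add_apply, h3v (Or.inr b), add_zero] at a
      exact Or.inr (Or.inr ⟨a, b⟩)

lemma Ubar_subset_Win {n a b : ℕ} (u : Fin n → ZMod 2) (hu : u ∈ Ubar n a b) :
    u ∈ Win n (n - a) (n - b) := by
  rw [mem_Win]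
  intro i hi
  by_contra h
  exact hi (hu i (by omega))

/-- The gains with some coordinate equal to `2`, where the leading digit is `0`. -/
def TwoSet : Set (ℝ × ℝ × ℝ) := {g | g.1 = 2 ∨ g.2.1 = 2 ∨ g.2.2 = 2}

lemma volume_TwoSet : volume TwoSet = 0 := by
  have h : TwoSet ⊆ ({2} ×ˢ Set.univ) ∪ ((Set.univ ×ˢ ({2} ×ˢ Set.univ)) ∪
      (Set.univ ×ˢ (Set.univ ×ˢ {2}))) := by
    rintro ⟨a, b, c⟩ h
    simpa [TwoSet] using h
  refine measure_mono_null h ?_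
  simp [Measure.volume_eq_prod, Measure.prod_prod]

/-- Lemma 4 of the paper. Outside a set of channel gains of
measure at most `δ`, the message subspaces of the lower-triangular
deterministic model are linearly independent. -/
theorem stmt_7 (δ : ℝ) (hδ : δ ∈ Set.Ioc (0:ℝ) 1)
    (n0 n1 n2 R0 R1 R2 R3 : ℕ)
    (hn10 : n0 ≤ n1) (hn02 : n2 ≤ n0)
    (hR0 : R0 ≤ n0) (hR1 : R1 ≤ n1) (hR2 : R2 ≤ n2) (hR3 : R3 ≤ n1)
    (hc1 : (R0 : ℝ) + R1 + R2 + R3 ≤ (n1 : ℝ) - Real.logb 2 (16 / δ))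
    (hc2 : (R0 : ℝ) + R2 + R3 ≤ (n0 : ℝ) - Real.logb 2 (16 / δ))
    (hc3 : (R2 : ℝ) + R3 ≤ (n2 : ℝ)) :
    volume {g : ℝ × ℝ × ℝ |
        g.1 ∈ Set.Ioc (1:ℝ) 2 ∧ g.2.1 ∈ Set.Ioc (1:ℝ) 2 ∧ g.2.2 ∈ Set.Ioc (1:ℝ) 2 ∧
        ∃ u0 ∈ Ubar n1 n0 (n0 - R0), ∃ u1 ∈ Ubar n1 n1 (n1 - R1),
          ∃ u2 ∈ Ubar n1 n2 (n2 - R2), ∃ u3 ∈ Ubar n1 R3 0,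
            ¬(u0 = 0 ∧ u1 = 0 ∧ u2 = 0 ∧ u3 = 0) ∧
            Gmat n1 g.1 *ᵥ u0 + Gmat n1 g.2.1 *ᵥ (u1 + u3) + Gmat n1 g.2.2 *ᵥ u2 = 0}
      ≤ ENNReal.ofReal δ := by
  have hδ0 := hδ.1
  set L := Real.logb 2 (16 / δ) with hL
  have hL0 : 0 ≤ L := Real.logb_nonneg (by norm_num) (by rw [le_div_iff₀ hδ0]; linarith [hδ.2])
  set K := ⌈L⌉₊ with hK
  -- The slacks in the rate constraints are integers, so they absorb the rounding of `L`.
  have hK1 : R0 + R1 + R2 + R3 + K ≤ n1 := by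
    have h : R0 + R1 + R2 + R3 ≤ n1 := by
      have : (R0 : ℝ) + R1 + R2 + R3 ≤ n1 := by linarith
      exact_mod_cast this
    have : K ≤ n1 - (R0 + R1 + R2 + R3) := by
      rw [hK, Nat.ceil_le, Nat.cast_sub h]; push_cast; linarith
    omega
  have hK2 : R0 + R2 + R3 + K ≤ n0 := by
    have h : R0 + R2 + R3 ≤ n0 := by
      have : (R0 : ℝ) + R2 + R3 ≤ n0 := by linarith
      exact_mod_cast this
    have : K ≤ n0 - (R0 + R2 + R3) := by
      rw [hK, Nat.ceil_le, Nat.cast_sub h]; push_cast; linarith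
    omega
  have hK3 : R2 + R3 ≤ n2 := by exact_mod_cast hc3
  have hpow : (2⁻¹ : ℝ) ^ K ≤ δ / 16 := by
    have h1 : (16 / δ : ℝ) ≤ 2 ^ K := by
      rw [← Real.rpow_natCast, ← Real.logb_le_iff_le_rpow (by norm_num) (by positivity)]
      exact Nat.le_ceil L
    rw [inv_pow, inv_le_comm₀ (by positivity) (by positivity), inv_div]
    exact h1
  calc _ ≤ volume (TwoSet ∪ ⋃ v : Fin n1, Bad n0 n1 n2 R0 R1 R2 R3 v) := by
        refine measure_mono ?_
        rintro ⟨g0, g1, g2⟩ ⟨hg0, hg1, hg2, u0, hu0, u1, hu1, u2, hu2, u3, hu3, hne, heq⟩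
        by_cases ht : (g0, g1, g2) ∈ TwoSet
        · exact Or.inl ht
        right
        simp only [TwoSet, Set.mem_ofPred_eq, not_or] at ht
        have k0 := Ubar_subset_Win _ hu0
        have k1 := Ubar_subset_Win _ hu1
        have k2 := Ubar_subset_Win _ hu2
        have k3 := Ubar_subset_Win _ hu3
        rw [show n1 - (n0 - R0) = n1 - n0 + R0 by omega] at k0
        rw [show n1 - n1 = 0 by omega, show n1 - (n1 - R1) = R1 by omega] at k1
        rw [show n1 - (n2 - R2) = n1 - n2 + R2 by omega] at k2
        obtain ⟨v, hv⟩ := exists_leading hn10 hn02 (by omega) (by omega) hK3 k0 k1 k2 k3 hne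
          ⟨hg0.1, lt_of_le_of_ne hg0.2 ht.1⟩ ⟨hg1.1, lt_of_le_of_ne hg1.2 ht.2.1⟩
          ⟨hg2.1, lt_of_le_of_ne hg2.2 ht.2.2⟩ heq
        exact Set.mem_iUnion.2 ⟨v, Set.mem_biUnion hv ⟨⟨hg0, hg1, hg2⟩, heq⟩⟩
    _ ≤ 0 + ∑ v : Fin n1, volume (Bad n0 n1 n2 R0 R1 R2 R3 v) := by
        refine (measure_union_le _ _).trans ?_
        rw [volume_TwoSet]
        gcongr
        exact measure_iUnion_fintype_le _ _
    _ ≤ 2 * (2⁻¹ : ℝ≥0∞) ^ K * (2 + 2) := by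
        rw [zero_add]
        refine (Finset.sum_le_sum fun v _ => volume_Bad_le hn10 hn02 hR3 hK1 hK2 v).trans ?_
        rw [← Finset.mul_sum, Finset.sum_add_distrib]
        gcongr <;> exact sum_geometric_le _ _
    _ = ENNReal.ofReal (2 * (2⁻¹ : ℝ) ^ K * (2 + 2)) := by
        rw [ENNReal.ofReal_mul (by positivity), ENNReal.ofReal_mul (by positivity),
          ENNReal.ofReal_pow (by positivity), ENNReal.ofReal_inv_of_pos (by norm_num),
          ENNReal.ofReal_add (by norm_num) (by norm_num)]
        simp
    _ ≤ ENNReal.ofReal δ := ENNReal.ofReal_le_ofReal (by linarith)
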